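/- arXiv:2307.01092 — 3 statements merged into one kernel-verified Lean document; each statement's English description precedes it below -/
import Mathlib

section
/- The polynomial f_δ, regarded as a polynomial over ℚ, is irreducible of degree 16. -/
open Polynomial in
/-- The degree-16 polynomial `f_δ`, regarded as a polynomial over ℚ. -/
noncomputable def fdeltaQ : Polynomial ℚ :=
  589824 * X ^ 16 - 7077888 * X ^ 15 + 41189376 * X ^ 14 - 154386432 * X ^ 13 +
    416788480 * X ^ 12 - 857112576 * X ^ 11 + 1383417856 * X ^ 10 - 1779354624 * X ^ 9 +
    1834437632 * X ^ 8 - 1514108928 * X ^ 7 + 992782336 * X ^ 6 - 509312064 * X ^ 5 +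
    199354208 * X ^ 4 - 57160752 * X ^ 3 + 11200088 * X ^ 2 - 1313928 * X + 67417

/-
Substituting `x = (t + 5) / 8` and clearing denominators turns `f_δ` into an integer polynomial
whose constant coefficient is a prime exceeding the sum of the absolute values of the other
coefficients. All complex roots of such a polynomial lie outside the closed unit disc. In a
factorization one factor has constant coefficient `±1`; were it nonconstant, this coefficient
would be, in absolute value, its leading coefficient times the product of its roots, hence larger
than one.
-/

open Polynomial

theorem one_lt_norm_of_isRoot_of_sum_norm_coeff_lt {R : Type*} [SeminormedRing R] {p : R[X]} {z : R}
    (hz : p.IsRoot z)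
    (hp : ∑ i ∈ Finset.range p.natDegree, ‖p.coeff (i + 1)‖ < ‖p.coeff 0‖) : 1 < ‖z‖ := by
  by_contra! hz1
  have hsum : ∑ i ∈ Finset.range p.natDegree, p.coeff (i + 1) * z ^ (i + 1) + p.coeff 0 = 0 := by
    rw [← hz.eq_zero, eval_eq_sum_range, Finset.sum_range_succ', pow_zero, mul_one]
  have hterm (i : ℕ) : ‖p.coeff (i + 1) * z ^ (i + 1)‖ ≤ ‖p.coeff (i + 1)‖ :=
    calc ‖p.coeff (i + 1) * z ^ (i + 1)‖ ≤ ‖p.coeff (i + 1)‖ * ‖z‖ ^ (i + 1) :=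
          (norm_mul_le _ _).trans <| by gcongr; exact norm_pow_le' z i.succ_pos
      _ ≤ ‖p.coeff (i + 1)‖ :=
          mul_le_of_le_one_right (norm_nonneg _) (pow_le_one₀ (norm_nonneg z) hz1)
  refine hp.not_ge ?_
  rw [eq_neg_of_add_eq_zero_right hsum, norm_neg]
  exact norm_sum_le_of_le _ fun i _ ↦ hterm i

theorem one_lt_norm_multiset_prod {K : Type*} [NormedField K] {s : Multiset K} (hs : s ≠ 0)
    (h : ∀ z ∈ s, 1 < ‖z‖) : 1 < ‖s.prod‖ := by
  obtain ⟨z, hz⟩ := Multiset.exists_mem_of_ne_zero hs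
  obtain ⟨t, rfl⟩ := Multiset.exists_cons_of_mem hz
  have ht : 1 ≤ ‖t.prod‖ := by
    rw [← normHom_apply, map_multiset_prod]
    exact Multiset.one_le_prod_map fun w hw ↦ (h w (Multiset.mem_cons_of_mem hw)).le
  rw [Multiset.prod_cons, norm_mul]
  exact one_lt_mul_of_lt_of_le (h z hz) ht

theorem norm_leadingCoeff_lt_norm_coeff_zero {K : Type*} [NormedField K] {p : K[X]}
    (hp : p.Splits) (hdeg : p.natDegree ≠ 0) (hroots : ∀ z ∈ p.roots, 1 < ‖z‖) :
    ‖p.leadingCoeff‖ < ‖p.coeff 0‖ := by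
  have hlead : 0 < ‖p.leadingCoeff‖ :=
    norm_pos_iff.2 (leadingCoeff_ne_zero.2 (ne_zero_of_natDegree_gt hdeg.bot_lt))
  have hne : p.roots ≠ 0 := by
    rwa [← Multiset.card_pos, ← hp.natDegree_eq_card_roots, Nat.pos_iff_ne_zero]
  rw [hp.coeff_zero_eq_leadingCoeff_mul_prod_roots]
  simpa using lt_mul_of_one_lt_right hlead (one_lt_norm_multiset_prod hne hroots)

theorem isUnit_of_isUnit_coeff_zero_of_one_lt_norm_roots {g : ℤ[X]} (hg : IsUnit (g.coeff 0))
    (hroots : ∀ z : ℂ, aeval z g = 0 → 1 < ‖z‖) : IsUnit g := by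
  by_cases hdeg : g.natDegree = 0
  · rw [eq_C_of_natDegree_eq_zero hdeg]
    exact hg.map C
  have hinj : Function.Injective (algebraMap ℤ ℂ) := (algebraMap ℤ ℂ).injective_int
  have hlt : ‖(g.map (algebraMap ℤ ℂ)).leadingCoeff‖ < ‖(g.map (algebraMap ℤ ℂ)).coeff 0‖ := by
    refine norm_leadingCoeff_lt_norm_coeff_zero (IsAlgClosed.splits _)
      (by rwa [natDegree_map_eq_of_injective hinj]) fun z hz ↦ hroots z ?_
    rw [← eval_map_algebraMap]
    exact isRoot_of_mem_roots hz
  have habs : |g.leadingCoeff| < |g.coeff 0| := by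
    rw [leadingCoeff_map_of_injective hinj, coeff_map, eq_intCast, eq_intCast,
      Complex.norm_intCast, Complex.norm_intCast] at hlt
    exact_mod_cast hlt
  rw [Int.isUnit_iff_abs_eq.1 hg, Int.abs_lt_one_iff, leadingCoeff_eq_zero] at habs
  simp [habs] at hdeg

theorem irreducible_of_prime_coeff_zero_of_one_lt_norm_roots {f : ℤ[X]} (hf : Prime (f.coeff 0))
    (hroots : ∀ z : ℂ, aeval z f = 0 → 1 < ‖z‖) : Irreducible f where
  not_isUnit hu := hf.not_isUnit (hu.map constantCoeff)
  isUnit_or_isUnit a b hab := by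
    have hcoeff : f.coeff 0 = a.coeff 0 * b.coeff 0 := by rw [hab, mul_coeff_zero]
    refine (hf.irreducible.isUnit_or_isUnit hcoeff).imp
      (fun ha ↦ isUnit_of_isUnit_coeff_zero_of_one_lt_norm_roots ha fun z hz ↦ hroots z ?_)
      (fun hb ↦ isUnit_of_isUnit_coeff_zero_of_one_lt_norm_roots hb fun z hz ↦ hroots z ?_)
    all_goals simp [hab, hz]

theorem irreducible_of_prime_coeff_zero_of_sum_abs_coeff_lt {f : ℤ[X]} (hf : Prime (f.coeff 0))
    (hsum : ∑ i ∈ Finset.range f.natDegree, |f.coeff (i + 1)| < |f.coeff 0|) : Irreducible f := by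
  refine irreducible_of_prime_coeff_zero_of_one_lt_norm_roots hf fun z hz ↦ ?_
  refine one_lt_norm_of_isRoot_of_sum_norm_coeff_lt (p := f.map (algebraMap ℤ ℂ))
    (by rwa [IsRoot, eval_map_algebraMap]) ?_
  rw [natDegree_map_eq_of_injective (algebraMap ℤ ℂ).injective_int]
  simp only [coeff_map, eq_intCast, Complex.norm_intCast]
  exact_mod_cast hsum

theorem irreducible_comp_C_mul_X_add_C_iff {R : Type*} [CommRing R] {p : R[X]} {a : R}
    (ha : IsUnit a) (b : R) : Irreducible (p.comp (C a * X + C b)) ↔ Irreducible p := by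
  let := ha.invertible
  rw [comp_eq_aeval, ← algEquivCMulXAddC_apply]
  exact MulEquiv.irreducible_iff (algEquivCMulXAddC a b)

/-- The integer polynomial `4 ^ 16 * f_δ ((t + 5) / 8)` in `t`; the center `5 / 8` and the scale
`1 / 8` are chosen to make its constant coefficient a dominant prime. -/
noncomputable def fdeltaShift : ℤ[X] :=
  9 * X ^ 16 - 144 * X ^ 15 + 2424 * X ^ 14 - 28464 * X ^ 13 + 257020 * X ^ 12 -
    1638288 * X ^ 11 + 7904584 * X ^ 10 - 33422768 * X ^ 9 + 56980982 * X ^ 8 +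
    243305936 * X ^ 7 - 950450616 * X ^ 6 + 3023766512 * X ^ 5 - 31631365892 * X ^ 4 +
    119750500944 * X ^ 3 - 10747632008 * X ^ 2 - 765162899216 * X + 1260804727177

theorem C_mul_fdeltaQ_eq_comp : C (4 ^ 16 : ℚ) * fdeltaQ =
    (fdeltaShift.map (algebraMap ℤ ℚ)).comp (C 8 * X + C (-5)) := by
  simp only [fdeltaQ, fdeltaShift, Polynomial.map_add, Polynomial.map_sub, Polynomial.map_mul,
    Polynomial.map_pow, map_X, Polynomial.map_ofNat, add_comp, sub_comp, mul_comp,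
    pow_comp, X_comp, ofNat_comp, C_neg, C_pow, C_ofNat]
  ring

theorem natDegree_fdeltaShift : fdeltaShift.natDegree = 16 := by
  unfold fdeltaShift
  compute_degree!

theorem coeff_zero_fdeltaShift : fdeltaShift.coeff 0 = 1260804727177 := by
  simp [coeff_zero_eq_eval_zero, fdeltaShift]

theorem sum_abs_coeff_fdeltaShift_lt :
    ∑ i ∈ Finset.range fdeltaShift.natDegree, |fdeltaShift.coeff (i + 1)| <
      |fdeltaShift.coeff 0| := by
  rw [natDegree_fdeltaShift, coeff_zero_fdeltaShift]
  simp [Finset.sum_range_succ, fdeltaShift, coeff_X, coeff_ofNat_succ]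

theorem nat_prime_1260804727177 : Nat.Prime 1260804727177 := by
  have hfactors {q : ℕ} (hq : q.Prime) (hdvd : q ∣ 1260804727177 - 1) :
      q = 2 ∨ q = 3 ∨ q = 887 ∨ q = 59226077 := by
    simpa using (Nat.mem_primeFactorsList' (p := q) (n := 1260804727176)).2 ⟨hq, hdvd, by simp⟩
  refine lucas_primality 1260804727177 10 (by norm_num only; reduce_mod_char) fun q hq hdvd ↦ ?_
  rcases hfactors hq hdvd with rfl | rfl | rfl | rfl <;>
  · norm_num only
    reduce_mod_char
    rw [Ne, ← Nat.cast_ofNat (R := ZMod 1260804727177), ← Nat.cast_one,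
      ZMod.natCast_eq_natCast_iff']
    norm_num only

theorem irreducible_fdeltaShift : Irreducible fdeltaShift := by
  refine irreducible_of_prime_coeff_zero_of_sum_abs_coeff_lt ?_ sum_abs_coeff_fdeltaShift_lt
  rw [coeff_zero_fdeltaShift]
  exact Nat.prime_iff_prime_int.1 nat_prime_1260804727177

theorem irreducible_fdeltaQ : Irreducible fdeltaQ := by
  have hprimitive : fdeltaShift.IsPrimitive :=
    irreducible_fdeltaShift.isPrimitive (by simp [natDegree_fdeltaShift])
  have hmap : Irreducible (fdeltaShift.map (algebraMap ℤ ℚ)) :=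
    (IsPrimitive.Int.irreducible_iff_irreducible_map_cast hprimitive).1 irreducible_fdeltaShift
  have hcomp : Irreducible (C (4 ^ 16 : ℚ) * fdeltaQ) := by
    rw [C_mul_fdeltaQ_eq_comp]
    exact (irreducible_comp_C_mul_X_add_C_iff (IsUnit.mk0 8 (by norm_num)) (-5)).2 hmap
  have hunit : IsUnit (C (4 ^ 16 : ℚ)) := isUnit_C.2 (IsUnit.mk0 _ (by norm_num))
  exact (irreducible_isUnit_mul hunit).1 hcomp

theorem natDegree_fdeltaQ : fdeltaQ.natDegree = 16 := by
  unfold fdeltaQ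
  compute_degree!

/-- The polynomial `f_δ`, regarded as a polynomial over ℚ, is irreducible of degree 16. -/
theorem fdelta_irreducible_degree_sixteen :
    Irreducible fdeltaQ ∧ fdeltaQ.natDegree = 16 := by
  exact ⟨irreducible_fdeltaQ, natDegree_fdeltaQ⟩
end

section
/- The reduction of f_δ modulo 23, i.e., the image of f_δ under the coefficient map ℤ[X] → (ℤ/23ℤ)[X], equals 12 times a monic irreducible polynomial of degree 16 over ℤ/23ℤ; in particular f_δ mod 23 is irreducible in (ℤ/23ℤ)[X] up to a unit (corresponding to a 16-cycle in the Galois group). -/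
open Polynomial in
/-- The degree-16 integer polynomial `f_δ` whose root in [0.167, 0.169] is the
optimal value of δ. -/
noncomputable def fdelta : Polynomial ℤ :=
  589824 * X ^ 16 - 7077888 * X ^ 15 + 41189376 * X ^ 14 - 154386432 * X ^ 13 +
    416788480 * X ^ 12 - 857112576 * X ^ 11 + 1383417856 * X ^ 10 - 1779354624 * X ^ 9 +
    1834437632 * X ^ 8 - 1514108928 * X ^ 7 + 992782336 * X ^ 6 - 509312064 * X ^ 5 +
    199354208 * X ^ 4 - 57160752 * X ^ 3 + 11200088 * X ^ 2 - 1313928 * X + 67417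

/-!
A polynomial `f` of degree `n` over a field with `q` elements is irreducible as soon as it divides
`X ^ q ^ n - X` and is coprime to `X ^ q ^ (n / ℓ) - X` for every prime `ℓ ∣ n` (Rabin's test):
the degree of an irreducible factor divides `n`, and a proper divisor of `n` divides some `n / ℓ`.
For the monic associate of `f_δ` mod 23 we have `n = 16`, so only `ℓ = 2` matters, and both
conditions are verified by computing with coefficient lists in `𝔽₂₃[X] ⧸ (f)`.
-/

open Polynomial

theorem isCoprime_of_mk_mul_eq_one {R : Type*} [CommRing R] {f g u : R[X]}
    (h : AdjoinRoot.mk f (u * g) = 1) : IsCoprime f g := by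
  rw [← map_one (AdjoinRoot.mk f), AdjoinRoot.mk_eq_mk] at h
  obtain ⟨k, hk⟩ := h
  exact ⟨-k, u, by linear_combination hk⟩

theorem irreducible_of_rabin {K : Type*} [Field K] [Finite K] {f : K[X]} (hf : 0 < f.natDegree)
    (hdvd : f ∣ X ^ Nat.card K ^ f.natDegree - X)
    (hcop : ∀ ℓ : ℕ, ℓ.Prime → ℓ ∣ f.natDegree →
      IsCoprime f (X ^ Nat.card K ^ (f.natDegree / ℓ) - X)) :
    Irreducible f := by
  have hf0 : f ≠ 0 := ne_zero_of_natDegree_gt hf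
  obtain ⟨h, h_irr, hhf⟩ :=
    WfDvdMonoid.exists_irreducible_factor (not_isUnit_of_natDegree_pos f hf) hf0
  obtain ⟨m, hm⟩ := h_irr.natDegree_dvd_of_dvd_X_pow_card_pow_sub_X (hhf.trans hdvd)
  suffices hm1 : m = 1 by
    have h_assoc : Associated h f := associated_of_dvd_of_natDegree_le hhf hf0 (by simp [hm, hm1])
    exact h_assoc.irreducible h_irr
  by_contra hm1
  obtain ⟨ℓ, hℓ, k, rfl⟩ := Nat.exists_prime_and_dvd hm1
  have hm_eq : f.natDegree = ℓ * (h.natDegree * k) := by rw [hm, mul_left_comm]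
  have h_degree_dvd : h.natDegree ∣ f.natDegree / ℓ :=
    ⟨k, Nat.div_eq_of_eq_mul_right hℓ.pos hm_eq⟩
  have hh_dvd : h ∣ X ^ Nat.card K ^ (f.natDegree / ℓ) - X :=
    h_irr.natDegree_dvd_iff_dvd_X_pow_card_pow_sub_X.mp h_degree_dvd
  exact h_irr.not_isUnit ((hcop ℓ hℓ (Dvd.intro _ hm_eq.symm)).isUnit_of_dvd' hhf hh_dvd)

namespace CoeffList

/-- Coefficientwise `a + t * b` modulo `p`. Throughout, a list of natural numbers stands for the
polynomial with these coefficients, lowest degree first; its value at `x` is `Nat.ofDigits x`. -/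
def addSMul (p t : ℕ) : List ℕ → List ℕ → List ℕ
  | a, [] => a
  | [], b :: bs => (t * b) % p :: addSMul p t [] bs
  | a :: as, b :: bs => (a + t * b) % p :: addSMul p t as bs

/-- Multiplication by `X` modulo `p` and `X ^ r.length - r`, where `r` is a coefficient list. For
lists of length at most `r.length` the product is again such a list. -/
def mulX (p : ℕ) (r a : List ℕ) : List ℕ :=
  match (0 :: a).drop r.length with
  | [t] => addSMul p t ((0 :: a).take r.length) r
  | _ => 0 :: a

/-- Multiplication modulo `p` and `X ^ r.length - r`, by Horner's scheme in the first factor. -/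
def mul (p : ℕ) (r : List ℕ) : List ℕ → List ℕ → List ℕ
  | [], _ => []
  | c :: a, b => addSMul p c (mulX p r (mul p r a b)) b

/-- Powers modulo `p` and `X ^ r.length - r`, by repeated squaring. -/
def pow (p : ℕ) (r a : List ℕ) (m : ℕ) : List ℕ :=
  (Nat.digits 2 m).foldr (fun d s => (mul p r a)^[d] (mul p r s s)) [1]

/-- The Frobenius map `a ↦ a ^ p` modulo `p` and `X ^ r.length - r`. -/
def frob (p : ℕ) (r a : List ℕ) : List ℕ := pow p r a p

/-- The coefficient list of `X`, padded with zeros to length `n`. -/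
def var (n : ℕ) : List ℕ := [0, 1].rightpad n 0

/-- The monic polynomial `X ^ n - r` whose tail `r`, of degree less than `n`, is given by its list
of `n` coefficients. -/
noncomputable def modulus (R : Type*) [CommRing R] (r : List ℕ) : R[X] :=
  X ^ r.length - Nat.ofDigits X r

theorem degree_ofDigits_X_lt {R : Type*} [Semiring R] (l : List ℕ) :
    (Nat.ofDigits (X : R[X]) l).degree < l.length := by
  rw [degree_lt_iff_coeff_zero]
  induction l with
  | nil => simp [Nat.ofDigits]
  | cons c l ih =>
    rintro (_ | m) hm
    · simp at hm
    · rw [Nat.ofDigits, coeff_add, coeff_X_mul, ih m (by simpa using hm), ← C_eq_natCast,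
        coeff_C_succ, add_zero]

section Modulus

variable {R : Type*} [CommRing R]

theorem monic_modulus (r : List ℕ) : (modulus R r).Monic :=
  monic_X_pow_sub (degree_ofDigits_X_lt r)

theorem natDegree_modulus [Nontrivial R] (r : List ℕ) : (modulus R r).natDegree = r.length := by
  apply natDegree_eq_of_degree_eq_some
  rw [modulus, degree_sub_eq_left_of_degree_lt] <;> simp [degree_ofDigits_X_lt]

theorem mk_ofDigits_X (f : R[X]) (l : List ℕ) :
    AdjoinRoot.mk f (Nat.ofDigits X l) = Nat.ofDigits (AdjoinRoot.root f) l := by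
  induction l with
  | nil => simp [Nat.ofDigits]
  | cons c l ih => simp [Nat.ofDigits, ih]

theorem root_modulus_pow_length (r : List ℕ) :
    AdjoinRoot.root (modulus R r) ^ r.length =
      Nat.ofDigits (AdjoinRoot.root (modulus R r)) r := by
  rw [← mk_ofDigits_X, ← AdjoinRoot.mk_X, ← map_pow, AdjoinRoot.mk_eq_mk, modulus]

end Modulus

section Eval

variable {S : Type*} [CommSemiring S] (x : S)

theorem ofDigits_take_add_drop (n : ℕ) (l : List ℕ) :
    Nat.ofDigits x (l.take n) + x ^ n * Nat.ofDigits x (l.drop n) = Nat.ofDigits x l := by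
  induction n generalizing l with
  | zero => simp [Nat.ofDigits]
  | succ n ih =>
    cases l with
    | nil => simp [Nat.ofDigits]
    | cons c l =>
      simp only [List.take_succ_cons, List.drop_succ_cons, Nat.ofDigits, ← ih l]
      ring

theorem ofDigits_var (n : ℕ) : Nat.ofDigits x (var n) = x := by
  have h_zeros (k : ℕ) : Nat.ofDigits x (List.replicate k 0) = 0 := by
    induction k <;> simp_all [List.replicate_succ, Nat.ofDigits]
  simp [var, List.rightpad, Nat.ofDigits, h_zeros]

variable (p : ℕ) [CharP S p]

theorem ofDigits_addSMul (t : ℕ) (a b : List ℕ) :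
    Nat.ofDigits x (addSMul p t a b) = Nat.ofDigits x a + t * Nat.ofDigits x b := by
  induction b generalizing a with
  | nil => cases a <;> simp [addSMul, Nat.ofDigits]
  | cons b bs ih =>
    cases a <;>
    · simp only [addSMul, Nat.ofDigits, ih, ← CharP.cast_eq_mod]
      push_cast
      ring

variable {x} {r : List ℕ} (hx : x ^ r.length = Nat.ofDigits x r)
include hx

theorem ofDigits_mulX (a : List ℕ) :
    Nat.ofDigits x (mulX p r a) = x * Nat.ofDigits x a := by
  have h_shift : Nat.ofDigits x (0 :: a) = x * Nat.ofDigits x a := by simp [Nat.ofDigits]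
  unfold mulX
  split
  · next t h_drop =>
    rw [ofDigits_addSMul, ← hx, ← h_shift, ← ofDigits_take_add_drop x r.length (0 :: a), h_drop]
    simp [Nat.ofDigits, mul_comm]
  · exact h_shift

theorem ofDigits_mul (a b : List ℕ) :
    Nat.ofDigits x (mul p r a b) = Nat.ofDigits x a * Nat.ofDigits x b := by
  induction a with
  | nil => simp [mul, Nat.ofDigits]
  | cons c a ih =>
    rw [mul, ofDigits_addSMul, ofDigits_mulX p hx, ih, Nat.ofDigits]
    ring

theorem ofDigits_pow (a : List ℕ) (m : ℕ) :
    Nat.ofDigits x (pow p r a m) = Nat.ofDigits x a ^ m := by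
  have h_mul_iterate (d : ℕ) (s : List ℕ) :
      Nat.ofDigits x ((mul p r a)^[d] s) = Nat.ofDigits x a ^ d * Nat.ofDigits x s := by
    induction d with
    | zero => simp
    | succ d ih => rw [Function.iterate_succ_apply', ofDigits_mul p hx, ih, pow_succ', mul_assoc]
  conv_rhs => rw [← Nat.ofDigits_digits 2 m]
  unfold pow
  induction Nat.digits 2 m with
  | nil => simp [Nat.ofDigits]
  | cons d ds ih =>
    rw [List.foldr_cons, h_mul_iterate, ofDigits_mul p hx, ih, Nat.ofDigits_cons, pow_add, pow_mul']
    ring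

theorem ofDigits_frob_iterate (a : List ℕ) (k : ℕ) :
    Nat.ofDigits x ((frob p r)^[k] a) = Nat.ofDigits x a ^ p ^ k := by
  induction k with
  | zero => simp
  | succ k ih => rw [Function.iterate_succ_apply', frob, ofDigits_pow p hx, ih, pow_succ, pow_mul]

end Eval

-- The second condition says that `X ^ p ^ (n / ℓ) - X` has an inverse `u` modulo `X ^ n - r`.
theorem irreducible_modulus_of_frob {p : ℕ} [Fact p.Prime] {r : List ℕ} (hr : r ≠ [])
    (h_periodic : Function.IsPeriodicPt (frob p r) r.length (var r.length))
    (h_inv : ∀ ℓ : ℕ, ℓ.Prime → ℓ ∣ r.length → ∃ u,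
      mul p r u ((frob p r)^[r.length / ℓ] (var r.length)) = addSMul p 1 [1] (mulX p r u)) :
    Irreducible (modulus (ZMod p) r) := by
  set f := modulus (ZMod p) r
  have h_natDegree : f.natDegree = r.length := natDegree_modulus r
  have hr_pos : 0 < r.length := List.length_pos_iff.mpr hr
  have : Nontrivial (AdjoinRoot f) :=
    AdjoinRoot.nontrivial f (degree_ne_of_natDegree_ne (h_natDegree ▸ hr_pos.ne'))
  have : CharP (AdjoinRoot f) p :=
    charP_of_injective_algebraMap (algebraMap (ZMod p) (AdjoinRoot f)).injective p
  have hx : AdjoinRoot.root f ^ r.length = Nat.ofDigits (AdjoinRoot.root f) r :=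
    root_modulus_pow_length r
  have h_frob (k : ℕ) : AdjoinRoot.root f ^ p ^ k =
      Nat.ofDigits (AdjoinRoot.root f) ((frob p r)^[k] (var r.length)) := by
    rw [ofDigits_frob_iterate p hx, ofDigits_var]
  apply irreducible_of_rabin
  · rwa [h_natDegree]
  · rw [h_natDegree, Nat.card_zmod, ← AdjoinRoot.mk_eq_mk, map_pow, AdjoinRoot.mk_X, h_frob,
      h_periodic.eq, ofDigits_var]
  · intro ℓ hℓ hℓ_dvd
    rw [h_natDegree] at hℓ_dvd ⊢
    obtain ⟨u, hu⟩ := h_inv ℓ hℓ hℓ_dvd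
    apply isCoprime_of_mk_mul_eq_one (u := Nat.ofDigits X u)
    have h_eval := congrArg (Nat.ofDigits (AdjoinRoot.root f)) hu
    rw [ofDigits_mul p hx, ofDigits_addSMul, ofDigits_mulX p hx, ← h_frob] at h_eval
    simp only [Nat.ofDigits, Nat.cast_one] at h_eval
    rw [Nat.card_zmod, map_mul, map_sub, map_pow, mk_ofDigits_X, AdjoinRoot.mk_X]
    linear_combination h_eval

end CoeffList

open CoeffList

/-- The coefficients of the remainder of `X ^ 16` modulo `f_δ` over `ℤ/23ℤ`. -/
def fdeltaTail : List ℕ := [15, 14, 7, 4, 11, 13, 5, 21, 4, 1, 3, 8, 11, 3, 3, 12]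

theorem fdelta_map_eq :
    fdelta.map (Int.castRingHom (ZMod 23)) = C 12 * modulus (ZMod 23) fdeltaTail := by
  have h12 : (C 12 : (ZMod 23)[X]) = 12 := rfl
  simp only [fdelta, modulus, fdeltaTail, h12, Nat.ofDigits, List.length, Polynomial.map_add,
    Polynomial.map_sub, Polynomial.map_mul, Polynomial.map_pow, map_X, Polynomial.map_ofNat]
  push_cast
  rw [← sub_eq_zero]
  ring_nf
  reduce_mod_char

/-- The coefficients of `X ^ 23 ^ 8` modulo `f_δ` over `ℤ/23ℤ`. -/
def frobEight : List ℕ := [18, 15, 9, 20, 12, 8, 7, 9, 13, 14, 10, 0, 18, 8, 17, 19]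

/-- The coefficients of the inverse of `X ^ 23 ^ 8 - X` modulo `f_δ` over `ℤ/23ℤ`. -/
def frobEightInv : List ℕ := [22, 2, 2, 3, 6, 10, 22, 1, 0, 12, 10, 15, 20, 5, 5, 13]

theorem frob_iterate_eight_var : (frob 23 fdeltaTail)^[8] (var 16) = frobEight := by
  decide +kernel

theorem frob_iterate_eight_frobEight : (frob 23 fdeltaTail)^[8] frobEight = var 16 := by
  decide +kernel

theorem mul_frobEightInv :
    mul 23 fdeltaTail frobEightInv frobEight =
      addSMul 23 1 [1] (mulX 23 fdeltaTail frobEightInv) := by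
  decide +kernel

theorem irreducible_modulus_fdeltaTail : Irreducible (modulus (ZMod 23) fdeltaTail) := by
  have : Fact (Nat.Prime 23) := ⟨by norm_num⟩
  have h_length : fdeltaTail.length = 2 ^ 4 := rfl
  apply irreducible_modulus_of_frob (r := fdeltaTail) (List.cons_ne_nil _ _)
  · change (frob 23 fdeltaTail)^[8 + 8] (var 16) = var 16
    rw [Function.iterate_add_apply, frob_iterate_eight_var, frob_iterate_eight_frobEight]
  · intro ℓ hℓ hℓ_dvd
    obtain rfl : ℓ = 2 :=
      (Nat.prime_dvd_prime_iff_eq hℓ Nat.prime_two).mp (hℓ.dvd_of_dvd_pow (h_length ▸ hℓ_dvd))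
    refine ⟨frobEightInv, ?_⟩
    change mul 23 fdeltaTail frobEightInv ((frob 23 fdeltaTail)^[8] (var 16)) = _
    rw [frob_iterate_eight_var, mul_frobEightInv]

open Polynomial in
/-- The reduction of `f_δ` modulo 23 equals 12 times a monic irreducible polynomial of
degree 16 over ℤ/23ℤ; in particular `f_δ mod 23` is irreducible up to a unit
(corresponding to a 16-cycle in the Galois group). -/
theorem fdelta_mod_23_irreducible :
    ∃ g : Polynomial (ZMod 23), g.Monic ∧ Irreducible g ∧ g.natDegree = 16 ∧
      fdelta.map (Int.castRingHom (ZMod 23)) = C 12 * g := by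
  have : Fact (Nat.Prime 23) := ⟨by norm_num⟩
  exact ⟨modulus (ZMod 23) fdeltaTail, monic_modulus _, irreducible_modulus_fdeltaTail,
    natDegree_modulus _, fdelta_map_eq⟩
end

section
/- The reduction of f_δ modulo 47 factors in (ℤ/47ℤ)[X] as 21·(X + 44)·(X² + 34X + 39)·g(X), where g(X) = X^13 + 4X^12 + X^11 + 41X^10 + 12X^9 + 21X^8 + 24X^7 + 32X^5 + 22X^4 + 10X^3 + 24X^2 + 18X + 13; moreover X² + 34X + 39 and g are irreducible over ℤ/47ℤ (so the factorization type is 1 + 2 + 13, giving a permutation of type 2 + 13). -/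
open Polynomial

/-- The irreducible degree-13 factor of `f_δ` modulo 47. -/
noncomputable def g47 : Polynomial (ZMod 47) :=
  X ^ 13 + 4 * X ^ 12 + X ^ 11 + 41 * X ^ 10 + 12 * X ^ 9 + 21 * X ^ 8 + 24 * X ^ 7 +
    32 * X ^ 5 + 22 * X ^ 4 + 10 * X ^ 3 + 24 * X ^ 2 + 18 * X + 13

/-!
A polynomial `f` over `𝔽_q` that divides `X ^ q ^ n - X` has only irreducible factors of degree
dividing `n`. If moreover `n = deg f` is prime and `f` has no root, the only possible degree is `n`
itself, so `f` is irreducible. For `g47` the divisibility `g47 ∣ X ^ 47 ^ 13 - X` says that the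
thirteenth iterate of Frobenius fixes the class of `X` modulo `g47`. Frobenius is linear over
`𝔽_47`, so this can be decided by iterating a linear map on coefficient lists of length 13.
-/

theorem irreducible_of_natDegree_prime_of_dvd_X_pow_card_pow_sub_X {K : Type*} [Field K] [Finite K]
    {f : K[X]} (hprime : f.natDegree.Prime) (hroot : ∀ a, ¬f.IsRoot a)
    (hdvd : f ∣ X ^ Nat.card K ^ f.natDegree - X) : Irreducible f := by
  obtain ⟨q, hq, hqf⟩ := exists_irreducible_of_natDegree_ne_zero hprime.ne_zero
  have hq_dvd : q.natDegree ∣ f.natDegree :=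
    hq.natDegree_dvd_of_dvd_X_pow_card_pow_sub_X (hqf.trans hdvd)
  rcases (Nat.dvd_prime hprime).1 hq_dvd with hone | hfull
  · obtain ⟨a, ha⟩ := exists_root_of_degree_eq_one
      ((degree_eq_iff_natDegree_eq_of_pos one_pos).2 hone)
    exact absurd (ha.dvd hqf) (hroot a)
  · have hf : f ≠ 0 := ne_zero_of_natDegree_gt hprime.pos
    exact (associated_of_dvd_of_natDegree_le hqf hf hfull.ge).irreducible hq

section OfDigits

variable {R : Type*}

theorem map_ofDigits {S F : Type*} [Semiring R] [Semiring S] [FunLike F R S] [RingHomClass F R S]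
    (f : F) (x : R) (l : List ℕ) : f (Nat.ofDigits x l) = Nat.ofDigits (f x) l := by
  induction l with
  | nil => simp [Nat.ofDigits]
  | cons a l ih => simp [Nat.ofDigits, ih]

theorem ofDigits_append [Semiring R] (x : R) (l m : List ℕ) :
    Nat.ofDigits x (l ++ m) = Nat.ofDigits x l + x ^ l.length * Nat.ofDigits x m := by
  induction l with
  | nil => simp [Nat.ofDigits]
  | cons a l ih => simp [Nat.ofDigits, ih, mul_add, add_assoc, pow_succ', mul_assoc]

end OfDigits

/-- Coefficients, up to multiples of `p`, of `l + c * m` for polynomials `l` and `m` given by their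
coefficient lists. All such lists have the constant term first, so that `Nat.ofDigits x l` is the
value at `x` of the polynomial `l`; their lengths need not agree. -/
def addMulMod (p c : ℕ) : List ℕ → List ℕ → List ℕ
  | l, [] => l
  | [], b :: m => c * b % p :: addMulMod p c [] m
  | a :: l, b :: m => (a + c * b) % p :: addMulMod p c l m

/-- Multiplication by the class of `X` in `(ZMod p)[X] / (X ^ r.length - r)`, on coefficient lists
with the constant term first. Below the full length `r.length` it is a plain shift. -/
def mulRootMod (p : ℕ) (r l : List ℕ) : List ℕ :=
  if l.length = r.length then addMulMod p (l.getLastD 0) (0 :: l.dropLast) r else 0 :: l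

/-- The product of `s` with the `p`-th power of its last argument in
`(ZMod p)[X] / (X ^ r.length - r)`, on coefficient lists with the constant term first. In
particular `frobeniusMod p r [1]` is the Frobenius map. Frobenius being linear, it suffices to
combine the elements `s * X ^ (p * i)`, which for `s = 1` are the rows of the Petr–Berlekamp
matrix. -/
def frobeniusMod (p : ℕ) (r : List ℕ) : List ℕ → List ℕ → List ℕ
  | _, [] => []
  | s, a :: l => addMulMod p a (frobeniusMod p r ((mulRootMod p r)^[p] s) l) s

section ModularArithmetic

variable {R : Type*} [CommRing R] {p : ℕ} [Algebra (ZMod p) R]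

theorem natCast_mod_of_algebra_zmod (a : ℕ) : ((a % p : ℕ) : R) = a := by
  rw [← map_natCast (algebraMap (ZMod p) R), ZMod.natCast_mod, map_natCast]

theorem ofDigits_addMulMod (x : R) (c : ℕ) (l m : List ℕ) :
    Nat.ofDigits x (addMulMod p c l m) = Nat.ofDigits x l + c * Nat.ofDigits x m := by
  fun_induction addMulMod p c l m with
  | case1 => simp [Nat.ofDigits]
  | case2 b m ih =>
    simp only [Nat.ofDigits, natCast_mod_of_algebra_zmod, ih, Nat.cast_mul]
    ring
  | case3 a l b m ih =>
    simp only [Nat.ofDigits, natCast_mod_of_algebra_zmod, ih, Nat.cast_add, Nat.cast_mul]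
    ring

variable {x : R} {r : List ℕ} (hx : x ^ r.length = Nat.ofDigits x r)
include hx

theorem ofDigits_mulRootMod (l : List ℕ) :
    Nat.ofDigits x (mulRootMod p r l) = x * Nat.ofDigits x l := by
  unfold mulRootMod
  split_ifs with hlen
  · rw [ofDigits_addMulMod, ← hx, ← hlen]
    rcases List.eq_nil_or_concat' l with rfl | ⟨m, c, rfl⟩
    · simp [Nat.ofDigits]
    · simp only [List.getLastD_concat, List.dropLast_concat, List.length_append,
        List.length_singleton, Nat.ofDigits, ofDigits_append, Nat.cast_zero]
      ring
  · simp [Nat.ofDigits]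

theorem ofDigits_iterate_mulRootMod (n : ℕ) (l : List ℕ) :
    Nat.ofDigits x ((mulRootMod p r)^[n] l) = x ^ n * Nat.ofDigits x l := by
  have hsemiconj : Function.Semiconj (Nat.ofDigits x) (mulRootMod p r) (x * ·) :=
    ofDigits_mulRootMod hx
  rw [(hsemiconj.iterate_right n).eq, mul_left_iterate_apply]

theorem ofDigits_frobeniusMod (s l : List ℕ) :
    Nat.ofDigits x (frobeniusMod p r s l) = Nat.ofDigits x s * Nat.ofDigits (x ^ p) l := by
  induction l generalizing s with
  | nil => simp [frobeniusMod, Nat.ofDigits]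
  | cons a l ih =>
    simp only [frobeniusMod, ofDigits_addMulMod, ih, ofDigits_iterate_mulRootMod hx, Nat.ofDigits]
    ring

theorem ofDigits_frobeniusMod_one [Fact p.Prime] (l : List ℕ) :
    Nat.ofDigits x (frobeniusMod p r [1] l) = Nat.ofDigits x l ^ p := by
  have hpow : Nat.ofDigits x l ^ p = Nat.ofDigits (x ^ p) l := by
    simpa using map_ofDigits (FiniteField.frobeniusAlgHom (ZMod p) R) x l
  simp [ofDigits_frobeniusMod hx, hpow, Nat.ofDigits]

theorem ofDigits_iterate_frobeniusMod_one [Fact p.Prime] (n : ℕ) (l : List ℕ) :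
    Nat.ofDigits x ((frobeniusMod p r [1])^[n] l) = Nat.ofDigits x l ^ p ^ n := by
  have hsemiconj : Function.Semiconj (Nat.ofDigits x) (frobeniusMod p r [1]) (· ^ p) :=
    ofDigits_frobeniusMod_one hx
  rw [(hsemiconj.iterate_right n).eq, pow_iterate]

end ModularArithmetic

section FrobeniusTest

variable {p : ℕ} [Fact p.Prime] {f : (ZMod p)[X]} {r : List ℕ}

theorem dvd_X_pow_sub_ofDigits_iterate_frobeniusMod (hr : f ∣ X ^ r.length - Nat.ofDigits X r)
    (n : ℕ) : f ∣ X ^ p ^ n - Nat.ofDigits X ((frobeniusMod p r [1])^[n] [0, 1]) := by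
  rw [← AdjoinRoot.mk_eq_zero, map_sub, map_pow, map_ofDigits, sub_eq_zero] at hr ⊢
  rw [ofDigits_iterate_frobeniusMod_one hr]
  simp [Nat.ofDigits]

theorem irreducible_of_natDegree_prime_of_iterate_frobeniusMod (hprime : f.natDegree.Prime)
    (hroot : ∀ a, ¬f.IsRoot a) (hr : f ∣ X ^ r.length - Nat.ofDigits X r)
    (hfix : Nat.ofDigits X ((frobeniusMod p r [1])^[f.natDegree] [0, 1]) = (X : (ZMod p)[X])) :
    Irreducible f := by
  apply irreducible_of_natDegree_prime_of_dvd_X_pow_card_pow_sub_X hprime hroot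
  rw [Nat.card_zmod]
  simpa only [hfix] using dvd_X_pow_sub_ofDigits_iterate_frobeniusMod hr f.natDegree

end FrobeniusTest

theorem map_fdelta_eq_mul : fdelta.map (Int.castRingHom (ZMod 47)) =
    C 21 * (X + C 44) * (X ^ 2 + 34 * X + C 39) * g47 := by
  rw [← sub_eq_zero]
  simp only [fdelta, g47, Polynomial.map_add, Polynomial.map_sub, Polynomial.map_mul,
    Polynomial.map_pow, Polynomial.map_X, Polynomial.map_ofNat, map_ofNat]
  ring_nf
  reduce_mod_char

theorem not_isRoot_quadratic_factor :
    ∀ a, ¬(X ^ 2 + 34 * X + C 39 : (ZMod 47)[X]).IsRoot a := by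
  simp only [IsRoot.def, eval_add, eval_mul, eval_pow, eval_X, eval_ofNat, eval_C]
  decide +kernel

theorem irreducible_quadratic_factor : Irreducible (X ^ 2 + 34 * X + C 39 : (ZMod 47)[X]) := by
  have : Fact (Nat.Prime 47) := ⟨by norm_num⟩
  have hdeg : (X ^ 2 + 34 * X + C 39 : (ZMod 47)[X]).natDegree = 2 := by compute_degree!
  exact irreducible_of_degree_le_three_of_not_isRoot (by simp [hdeg]) not_isRoot_quadratic_factor

/-- The coefficients, constant term first, of the remainder `X ^ 13 - g47` of `X ^ 13` modulo
`g47`. -/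
def g47Remainder : List ℕ := [34, 29, 23, 37, 25, 15, 0, 23, 26, 35, 6, 46, 43]

theorem g47_eq_X_pow_sub_ofDigits :
    g47 = X ^ g47Remainder.length - Nat.ofDigits X g47Remainder := by
  rw [← sub_eq_zero]
  simp only [g47, g47Remainder, List.length, Nat.ofDigits]
  push_cast
  ring_nf
  reduce_mod_char

theorem iterate_frobeniusMod_g47Remainder :
    (frobeniusMod 47 g47Remainder [1])^[13] [0, 1] = [0, 1, 0, 0, 0, 0, 0, 0, 0, 0, 0, 0, 0] := by
  decide +kernel

theorem natDegree_g47 : g47.natDegree = 13 := by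
  unfold g47
  compute_degree!

theorem not_isRoot_g47 : ∀ a, ¬g47.IsRoot a := by
  simp only [g47, IsRoot.def, eval_add, eval_mul, eval_pow, eval_X, eval_ofNat]
  decide +kernel

theorem irreducible_g47 : Irreducible g47 := by
  have : Fact (Nat.Prime 47) := ⟨by norm_num⟩
  have hprime : g47.natDegree.Prime := by norm_num [natDegree_g47]
  apply irreducible_of_natDegree_prime_of_iterate_frobeniusMod hprime not_isRoot_g47
    (dvd_of_eq g47_eq_X_pow_sub_ofDigits)
  rw [natDegree_g47, iterate_frobeniusMod_g47Remainder]
  simp [Nat.ofDigits]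

/-- The reduction of `f_δ` modulo 47 factors as
`21 · (X + 44) · (X² + 34X + 39) · g` with `X² + 34X + 39` and `g` irreducible over
ℤ/47ℤ, i.e. the factorization type is 1 + 2 + 13 (a permutation of type 2 + 13). -/
theorem fdelta_mod_47_factorization :
    fdelta.map (Int.castRingHom (ZMod 47)) =
        C 21 * (X + C 44) * (X ^ 2 + 34 * X + C 39) * g47 ∧
      Irreducible (X ^ 2 + 34 * X + C 39 : Polynomial (ZMod 47)) ∧ Irreducible g47 :=
  ⟨map_fdelta_eq_mul, irreducible_quadratic_factor, irreducible_g47⟩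
end
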